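/- Let A, Q, P ∈ ℝ^{n×n×r}, B ∈ ℝ^{n×m×r}, R ∈ ℝ^{m×m×r} be third-order tensors, and assume for each j = 0,…,r−1 that R̂_j + B̂_j^* P̂_j B̂_j is invertible (where ^* denotes conjugate transpose). Then P solves the T-algebraic Riccati equation P = Aᵀ⋆P⋆A − Aᵀ⋆P⋆B⋆(R + Bᵀ⋆P⋆B)^{−1}⋆Bᵀ⋆P⋆A + Q if and only if for every j = 0,…,r−1 the Fourier block P̂_j solves the complex matrix algebraic Riccati equation P̂_j = Â_j^* P̂_j Â_j − Â_j^* P̂_j B̂_j (R̂_j + B̂_j^* P̂_j B̂_j)^{−1} B̂_j^* P̂_j Â_j + Q̂_j. -/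

import Mathlib

/-!
STATEMENT 14: Assume each `R̂_j + B̂_j^* P̂_j B̂_j` is invertible.  Then `P` solves the
T-algebraic Riccati equation (T-inverse taken in the `ψ`-sense) iff every Fourier block
`P̂_j` solves the corresponding complex matrix algebraic Riccati equation.
-/

open Matrix

def psiBC {r : ℕ} {ι κ : Type*} (T : Fin r → Matrix ι κ ℝ) :
    Matrix (Fin r × ι) (Fin r × κ) ℝ :=
  fun p q => T (p.1 - q.1) p.2 q.2

def tProd {r : ℕ} {ι κ χ : Type*} [Fintype κ]
    (T : Fin r → Matrix ι κ ℝ) (S : Fin r → Matrix κ χ ℝ) :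
    Fin r → Matrix ι χ ℝ :=
  fun k => ∑ j : Fin r, T (k - j) * S j

/-- The T-transpose: `(Tᵀ)_k = (T_{-k})ᵀ`, so that `ψ(Tᵀ) = ψ(T)ᵀ`. -/
def tTr {r : ℕ} {ι κ : Type*} (T : Fin r → Matrix ι κ ℝ) :
    Fin r → Matrix κ ι ℝ :=
  fun k => (T (-k))ᵀ

noncomputable def fourierBlock {r : ℕ} {ι κ : Type*} (T : Fin r → Matrix ι κ ℝ) (j : Fin r) :
    Matrix ι κ ℂ :=
  ∑ k : Fin r,
    (Complex.exp (-(2 * Real.pi * Complex.I) / r)) ^ (j.val * k.val) • (T k).map Complex.ofReal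

noncomputable def chiF (r : ℕ) (j k : Fin r) : ℂ :=
  (Complex.exp (-(2 * Real.pi * Complex.I) / r)) ^ (j.val * k.val)

lemma omega_prim (r : ℕ) [NeZero r] :
    IsPrimitiveRoot (Complex.exp (-(2 * Real.pi * Complex.I) / r)) r := by
  have h := (Complex.isPrimitiveRoot_exp r (NeZero.ne r)).inv
  rw [← Complex.exp_neg] at h
  rwa [neg_div]

lemma chiF_add {r : ℕ} [NeZero r] (j a b : Fin r) :
    chiF r j (a + b) = chiF r j a * chiF r j b := by
  unfold chiF
  have h := (omega_prim r).pow_eq_one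
  set w := Complex.exp (-(2 * Real.pi * Complex.I) / r)
  have h2 : (w ^ j.val) ^ r = 1 := by rw [← pow_mul, mul_comm, pow_mul, h, one_pow]
  rw [← pow_add, ← mul_add, Fin.val_add, pow_mul, pow_mul]
  exact (pow_eq_pow_mod _ h2).symm

lemma chiF_zero {r : ℕ} [NeZero r] (j : Fin r) : chiF r j 0 = 1 := by
  simp [chiF]

lemma chiF_conj {r : ℕ} [NeZero r] (j a : Fin r) :
    star (chiF r j a) = chiF r j (-a) := by
  have h1 : chiF r j a * chiF r j (-a) = 1 := by
    rw [← chiF_add, add_neg_cancel, chiF_zero]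
  have hn : ‖chiF r j a‖ = 1 := by
    unfold chiF
    rw [norm_pow, (omega_prim r).norm'_eq_one (NeZero.ne r), one_pow]
  have h3 : star (chiF r j a) = (chiF r j a)⁻¹ := (Complex.inv_eq_conj hn).symm
  rw [h3]
  exact inv_eq_of_mul_eq_one_right h1

lemma fB_apply {r : ℕ} {ι κ : Type*} (T : Fin r → Matrix ι κ ℝ) (j : Fin r) (a : ι) (b : κ) :
    fourierBlock T j a b = ∑ k, chiF r j k * (T k a b : ℂ) := by
  simp [fourierBlock, chiF, Matrix.sum_apply]

lemma fB_eq {r : ℕ} {ι κ : Type*} (T : Fin r → Matrix ι κ ℝ) (j : Fin r) :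
    fourierBlock T j = ∑ k, chiF r j k • (T k).map Complex.ofReal := rfl

lemma fB_add {r : ℕ} {ι κ : Type*} (T S : Fin r → Matrix ι κ ℝ) (j : Fin r) :
    fourierBlock (T + S) j = fourierBlock T j + fourierBlock S j := by
  ext a b
  simp [fB_apply, mul_add, Finset.sum_add_distrib]

lemma fB_sub {r : ℕ} {ι κ : Type*} (T S : Fin r → Matrix ι κ ℝ) (j : Fin r) :
    fourierBlock (T - S) j = fourierBlock T j - fourierBlock S j := by
  ext a b
  simp [fB_apply, mul_sub, Finset.sum_sub_distrib]

lemma fB_tr {r : ℕ} [NeZero r] {ι κ : Type*} (T : Fin r → Matrix ι κ ℝ) (j : Fin r) :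
    fourierBlock (tTr T) j = (fourierBlock T j)ᴴ := by
  ext a b
  rw [conjTranspose_apply, fB_apply, fB_apply, star_sum, ← Equiv.sum_comp (Equiv.neg (Fin r))]
  refine Finset.sum_congr rfl fun k _ => ?_
  rw [star_mul', chiF_conj]
  simp [tTr]

lemma fB_prod {r : ℕ} [NeZero r] {ι κ χ : Type*} [Fintype κ]
    (T : Fin r → Matrix ι κ ℝ) (S : Fin r → Matrix κ χ ℝ) (j : Fin r) :
    fourierBlock (tProd T S) j = fourierBlock T j * fourierBlock S j := by
  have h : ∀ k, (tProd T S k).map Complex.ofReal =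
      ∑ l, (T (k - l)).map Complex.ofReal * (S l).map Complex.ofReal := by
    intro k
    ext a b
    simp [tProd, Matrix.sum_apply, Matrix.mul_apply]
  simp only [fB_eq, h, Finset.smul_sum]
  rw [Finset.sum_comm, Matrix.mul_sum]
  refine Finset.sum_congr rfl fun l _ => ?_
  rw [Matrix.sum_mul, ← Equiv.sum_comp (Equiv.addRight l)]
  refine Finset.sum_congr rfl fun k _ => ?_
  simp only [Equiv.coe_addRight, add_sub_cancel_right, chiF_add, Matrix.smul_mul,
    Matrix.mul_smul, smul_smul]
  rw [mul_comm]

lemma fB_inj {r : ℕ} [NeZero r] {ι κ : Type*} (T S : Fin r → Matrix ι κ ℝ)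
    (h : ∀ j, fourierBlock T j = fourierBlock S j) : T = S := by
  have hd : (Matrix.vandermonde (fun j : Fin r =>
      Complex.exp (-(2 * Real.pi * Complex.I) / r) ^ j.val)).det ≠ 0 := by
    rw [Matrix.det_vandermonde_ne_zero_iff]
    intro i j hij
    exact Fin.ext ((omega_prim r).pow_inj i.2 j.2 hij)
  funext k
  ext a b
  have hz := Matrix.eq_zero_of_mulVec_eq_zero hd (v := fun k => ((T k a b : ℂ) - (S k a b : ℂ))) (by
    funext j
    have := congrFun (congrFun (h j) a) b
    rw [fB_apply, fB_apply, ← sub_eq_zero, ← Finset.sum_sub_distrib] at this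
    simp only [Matrix.mulVec, dotProduct, Matrix.vandermonde_apply, ← pow_mul, Pi.zero_apply]
    rw [← this]
    refine Finset.sum_congr rfl fun k _ => ?_
    simp only [chiF, mul_sub])
  have := congrFun hz k
  simp only [Pi.zero_apply, sub_eq_zero] at this
  exact_mod_cast this

def tOne (r : ℕ) [NeZero r] (m : ℕ) : Fin r → Matrix (Fin m) (Fin m) ℝ :=
  fun k => if k = 0 then 1 else 0

lemma fB_one {r : ℕ} [NeZero r] (m : ℕ) (j : Fin r) : fourierBlock (tOne r m) j = 1 := by
  rw [fB_eq, Finset.sum_eq_single 0]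
  · simp [tOne, chiF_zero]
  · intro k _ hk
    simp [tOne, hk]
  · simp

lemma psi_one {r : ℕ} [NeZero r] (m : ℕ) : psiBC (tOne r m) = 1 := by
  ext ⟨i, a⟩ ⟨j, b⟩
  by_cases h : i = j
  · subst h
    simp [psiBC, tOne, Matrix.one_apply]
  · simp [psiBC, tOne, Matrix.one_apply, sub_eq_zero, h]

lemma psi_add {r : ℕ} {ι κ : Type*} (T S : Fin r → Matrix ι κ ℝ) :
    psiBC (T + S) = psiBC T + psiBC S := rfl

lemma psi_tr {r : ℕ} [NeZero r] {ι κ : Type*} (T : Fin r → Matrix ι κ ℝ) :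
    psiBC (tTr T) = (psiBC T)ᵀ := by
  ext ⟨i, a⟩ ⟨j, b⟩
  simp [psiBC, tTr]

lemma psi_prod {r : ℕ} [NeZero r] {ι κ χ : Type*} [Fintype κ]
    (T : Fin r → Matrix ι κ ℝ) (S : Fin r → Matrix κ χ ℝ) :
    psiBC (tProd T S) = psiBC T * psiBC S := by
  ext ⟨i, a⟩ ⟨j, b⟩
  simp only [psiBC, tProd, Matrix.sum_apply, Matrix.mul_apply, Fintype.sum_prod_type]
  rw [← Equiv.sum_comp (Equiv.subRight j)]
  refine Finset.sum_congr rfl fun k _ => ?_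
  simp

lemma psi_inj {r : ℕ} [NeZero r] {ι κ : Type*} (T S : Fin r → Matrix ι κ ℝ)
    (h : psiBC T = psiBC S) : T = S := by
  funext k
  ext a b
  simpa [psiBC] using congrFun (congrFun h (k, a)) (0, b)

lemma exists_tInv {r : ℕ} [NeZero r] {m : ℕ} (M : Fin r → Matrix (Fin m) (Fin m) ℝ)
    (h : ∀ j, IsUnit (fourierBlock M j)) : ∃ W, tProd M W = tOne r m := by
  let L : (Fin r → Matrix (Fin m) (Fin m) ℝ) →ₗ[ℝ] (Fin r → Matrix (Fin m) (Fin m) ℝ) :=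
    { toFun := tProd M
      map_add' := fun x y => by
        funext k
        simp [tProd, Matrix.mul_add, Finset.sum_add_distrib]
      map_smul' := fun c x => by
        funext k
        simp [tProd, Finset.smul_sum] }
  have hi : Function.Injective L := by
    intro x y hxy
    apply fB_inj
    intro j
    have h1 : fourierBlock (tProd M x) j = fourierBlock (tProd M y) j :=
      congrArg (fun z => fourierBlock z j) hxy
    rw [fB_prod, fB_prod] at h1
    exact (h j).mul_left_cancel h1
  exact (LinearMap.injective_iff_surjective.mp hi) (tOne r m)

theorem tRiccati_iff_fourier_riccati {n m r : ℕ}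
    (A Q P : Fin r → Matrix (Fin n) (Fin n) ℝ)
    (B : Fin r → Matrix (Fin n) (Fin m) ℝ) (R : Fin r → Matrix (Fin m) (Fin m) ℝ)
    (hInv : ∀ j : Fin r,
      IsUnit (fourierBlock R j + (fourierBlock B j)ᴴ * fourierBlock P j * fourierBlock B j)) :
    (∃ W : Fin r → Matrix (Fin m) (Fin m) ℝ,
        psiBC W = (psiBC R + (psiBC B)ᵀ * psiBC P * psiBC B)⁻¹ ∧
        P = tProd (tTr A) (tProd P A)
            - tProd (tTr A) (tProd P (tProd B (tProd W (tProd (tTr B) (tProd P A))))) + Q) ↔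
      ∀ j : Fin r,
        fourierBlock P j =
          (fourierBlock A j)ᴴ * fourierBlock P j * fourierBlock A j
            - (fourierBlock A j)ᴴ * fourierBlock P j * fourierBlock B j
              * (fourierBlock R j + (fourierBlock B j)ᴴ * fourierBlock P j * fourierBlock B j)⁻¹
              * ((fourierBlock B j)ᴴ * fourierBlock P j * fourierBlock A j)
            + fourierBlock Q j := by
  rcases Nat.eq_zero_or_pos r with hr | hr
  · subst hr
    refine ⟨fun _ j => j.elim0, fun _ => ⟨fun j => j.elim0, ?_, ?_⟩⟩
    · ext ⟨i, _⟩
      exact i.elim0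
    · funext i
      exact i.elim0
  haveI : NeZero r := ⟨hr.ne'⟩
  set M : Fin r → Matrix (Fin m) (Fin m) ℝ := R + tProd (tProd (tTr B) P) B with hM
  have hF : ∀ j, fourierBlock R j + (fourierBlock B j)ᴴ * fourierBlock P j * fourierBlock B j
      = fourierBlock M j := by
    intro j
    rw [hM, fB_add, fB_prod, fB_prod, fB_tr]
  have hψ : psiBC R + (psiBC B)ᵀ * psiBC P * psiBC B = psiBC M := by
    rw [hM, psi_add, psi_prod, psi_prod, psi_tr]
  simp only [hF] at hInv ⊢
  rw [hψ]
  obtain ⟨W, hW⟩ := exists_tInv M hInv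
  have hWψ : (psiBC M)⁻¹ = psiBC W := by
    apply Matrix.inv_eq_right_inv
    rw [← psi_prod, hW, psi_one]
  have hWF : ∀ j, (fourierBlock M j)⁻¹ = fourierBlock W j := by
    intro j
    apply Matrix.inv_eq_right_inv
    rw [← fB_prod, hW, fB_one]
  simp only [hWF]
  rw [hWψ]
  have key : ∀ j, fourierBlock (tProd (tTr A) (tProd P A)
            - tProd (tTr A) (tProd P (tProd B (tProd W (tProd (tTr B) (tProd P A))))) + Q) j =
      (fourierBlock A j)ᴴ * fourierBlock P j * fourierBlock A j
            - (fourierBlock A j)ᴴ * fourierBlock P j * fourierBlock B j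
              * fourierBlock W j
              * ((fourierBlock B j)ᴴ * fourierBlock P j * fourierBlock A j)
            + fourierBlock Q j := by
    intro j
    simp only [fB_add, fB_sub, fB_prod, fB_tr, Matrix.mul_assoc]
  simp only [← key]
  constructor
  · rintro ⟨W', h1, h2⟩ j
    obtain rfl := psi_inj _ _ h1
    exact congrArg (fun z => fourierBlock z j) h2
  · intro h
    exact ⟨W, rfl, fB_inj _ _ h⟩
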